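/- Let ε_1, …, ε_n be independent Rademacher random variables, let p ≥ 1, and for t ∈ ℝ^n set X_t = Σ_{j=1}^n e^{t_j} ε_j. Then for every t ∈ ℝ^n and every j ∈ {1,…,n}, E[ sgn(X_t) |X_t|^{p-1} ε_j ] ≥ 0. -/

import Mathlib

open Finset

/-!
Changing `ε_j` from `-1` to `1` while fixing the other signs increases `X_t`, hence also
`sgn(X_t) |X_t|^{p-1}`, because `x ↦ sgn(x) |x|^{p-1}` is monotone for `p ≥ 1`. Pairing the sign
vectors that differ only in coordinate `j` therefore makes every pair contribute a nonnegative
amount to the expectation.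
-/

theorem monotone_sign_mul_abs_rpow {q : ℝ} (hq : 0 ≤ q) :
    Monotone fun x : ℝ ↦ Real.sign x * |x| ^ q := by
  refine monotone_of_odd_of_monotoneOn_nonneg
    (fun x ↦ by rw [Real.sign_neg, abs_neg, neg_mul]) fun x hx y _ hxy ↦ ?_
  rcases (Set.mem_Ici.mp hx).eq_or_lt with rfl | hx_pos
  · have sign_nonneg : 0 ≤ Real.sign y := by
      rcases hxy.eq_or_lt with rfl | hy_pos
      · exact Real.sign_zero.ge
      · exact zero_le_one.trans_eq (Real.sign_of_pos hy_pos).symm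
    simpa only [Real.sign_zero, zero_mul] using mul_nonneg sign_nonneg (by positivity)
  · have hy_pos : 0 < y := hx_pos.trans_le hxy
    simp only [Real.sign_of_pos, abs_of_pos, hx_pos, hy_pos, one_mul]
    exact Real.rpow_le_rpow hx_pos.le hxy hq

/-- The value of a Rademacher variable, with `true` encoding `1` and `false` encoding `-1`, so that
the order `false ≤ true` on `Bool` agrees with that of the values. -/
def rademacherSign (b : Bool) : ℝ := if b then 1 else -1

theorem monotone_rademacherSign : Monotone rademacherSign := by
  rintro (_ | _) (_ | _) <;> simp [rademacherSign]

section SignVectors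

variable {ι : Type*} [Fintype ι] [DecidableEq ι] {j : ι}

theorem monotone_sum_mul_comp_update {α R : Type*} [Preorder α] [Semiring R] [PartialOrder R]
    [IsOrderedRing R] {g : α → R} (hg : Monotone g) {w : ι → R} (hw : 0 ≤ w j) (s : ι → α) :
    Monotone fun a ↦ ∑ i, w i * g (Function.update s j a i) := by
  refine fun a b hab ↦ sum_le_sum fun i _ ↦ ?_
  rcases eq_or_ne i j with rfl | hij
  · simpa only [Function.update_self] using mul_le_mul_of_nonneg_left (hg hab) hw
  · simp only [Function.update_of_ne hij, le_refl]

theorem sum_mul_rademacherSign_nonneg {F : (ι → Bool) → ℝ}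
    (hF : ∀ s, Monotone fun b ↦ F (Function.update s j b)) :
    0 ≤ ∑ s, F s * rademacherSign (s j) := by
  let glue : Bool → ({i // i ≠ j} → Bool) → ι → Bool :=
    fun b r ↦ (Equiv.funSplitAt j Bool).symm (b, r)
  have glue_self (b r) : glue b r j = b := by simp [glue]
  have update_glue (b c r) : Function.update (glue b r) j c = glue c r := by
    ext i
    rcases eq_or_ne i j with rfl | hij <;> simp [glue, *]
  have sum_eq : ∑ s, F s * rademacherSign (s j) = ∑ r, (F (glue true r) - F (glue false r)) := by
    rw [← (Equiv.funSplitAt j Bool).symm.sum_comp, Fintype.sum_prod_type_right]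
    refine sum_congr rfl fun r _ ↦ ?_
    change ∑ b, F (glue b r) * rademacherSign (glue b r j) = _
    simp [glue_self, rademacherSign, sub_eq_add_neg]
  rw [sum_eq]
  refine sum_nonneg fun r _ ↦ sub_nonneg.mpr ?_
  simpa only [update_glue] using hF (glue false r) (Bool.false_le true)

theorem rademacher_sign_correlation_nonneg_general {f : ℝ → ℝ} (hf : Monotone f) {w : ι → ℝ}
    (hw : 0 ≤ w j) :
    0 ≤ ∑ s : ι → Bool, f (∑ i, w i * rademacherSign (s i)) * rademacherSign (s j) :=
  sum_mul_rademacherSign_nonneg fun s ↦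
    hf.comp (monotone_sum_mul_comp_update monotone_rademacherSign hw s)

end SignVectors

/-- For independent Rademacher signs `ε_1, …, ε_n` (modelled by the uniform measure on
`{-1,1}^n`, encoded via `Fin n → Bool`), `p ≥ 1` and `X_t = Σ_j e^{t_j} ε_j`, we have
`E[sgn(X_t) |X_t|^{p-1} ε_j] ≥ 0` for every `t` and `j`. -/
theorem rademacher_sign_correlation_nonneg (n : ℕ) (p : ℝ) (hp : 1 ≤ p)
    (t : Fin n → ℝ) (j : Fin n) :
    0 ≤ (2 ^ n : ℝ)⁻¹ *
      ∑ s : Fin n → Bool,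
        (Real.sign (∑ i, Real.exp (t i) * (if s i then (1 : ℝ) else -1)) *
            |∑ i, Real.exp (t i) * (if s i then (1 : ℝ) else -1)| ^ (p - 1)) *
          (if s j then (1 : ℝ) else -1) :=
  mul_nonneg (by positivity) <| rademacher_sign_correlation_nonneg_general
    (monotone_sign_mul_abs_rpow (sub_nonneg.mpr hp)) (w := fun i ↦ Real.exp (t i))
    (Real.exp_nonneg (t j))
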